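/- Every real orthogonal n×n matrix V with det V = 1 can be written as a product of five symmetric positive definite real n×n matrices. -/

import Mathlib

open Matrix

namespace Matrix

variable {m n : Type*} [Fintype m] [Fintype n]

/-- A real matrix that is a product of two positive definite matrices. -/
def IsPosDefMul (B : Matrix n n ℝ) : Prop :=
  ∃ P Q : Matrix n n ℝ, P.PosDef ∧ Q.PosDef ∧ B = P * Q

/-- A real matrix that is a product of five positive definite matrices, grouped as `2 + 2 + 1`. -/
def IsPosDefMulFive (A : Matrix n n ℝ) : Prop :=
  ∃ B C K : Matrix n n ℝ, B.IsPosDefMul ∧ C.IsPosDefMul ∧ K.PosDef ∧ A = B * C * K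

theorem PosDef.fromBlocks_zero_zero {P : Matrix m m ℝ} {Q : Matrix n n ℝ} (hP : P.PosDef)
    (hQ : Q.PosDef) : (fromBlocks P 0 0 Q).PosDef := by
  refine .of_dotProduct_mulVec_pos (hP.1.fromBlocks (by simp) hQ.1) fun x hx => ?_
  obtain ⟨u, v, rfl⟩ : ∃ u v, x = Sum.elim u v := ⟨_, _, (Sum.elim_comp_inl_inr x).symm⟩
  have huv : u ≠ 0 ∨ v ≠ 0 := by
    by_contra! h
    exact hx (by rw [h.1, h.2]; simp)
  have hu := hP.posSemidef.dotProduct_mulVec_nonneg u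
  have hv := hQ.posSemidef.dotProduct_mulVec_nonneg v
  simp only [star_trivial, fromBlocks_mulVec, Sum.elim_comp_inl, Sum.elim_comp_inr, zero_mulVec,
    add_zero, zero_add, sumElim_dotProduct_sumElim] at hu hv ⊢
  rcases huv with h | h
  · have := hP.dotProduct_mulVec_pos h
    simp only [star_trivial] at this
    linarith
  · have := hQ.dotProduct_mulVec_pos h
    simp only [star_trivial] at this
    linarith

theorem IsPosDefMul.transpose {B : Matrix n n ℝ} (hB : B.IsPosDefMul) : Bᵀ.IsPosDefMul := by
  obtain ⟨P, Q, hP, hQ, rfl⟩ := hB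
  exact ⟨Qᵀ, Pᵀ, hQ.transpose, hP.transpose, transpose_mul _ _⟩

theorem IsPosDefMul.submatrix {B : Matrix n n ℝ} (hB : B.IsPosDefMul) (e : m ≃ n) :
    (B.submatrix e e).IsPosDefMul := by
  obtain ⟨P, Q, hP, hQ, rfl⟩ := hB
  exact ⟨_, _, hP.submatrix e.injective, hQ.submatrix e.injective,
    (submatrix_mul_equiv P Q e e e).symm⟩

theorem IsPosDefMulFive.submatrix {A : Matrix n n ℝ} (hA : A.IsPosDefMulFive) (e : m ≃ n) :
    (A.submatrix e e).IsPosDefMulFive := by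
  obtain ⟨B, C, K, hB, hC, hK, rfl⟩ := hA
  exact ⟨_, _, _, hB.submatrix e, hC.submatrix e, hK.submatrix e.injective, by
    simp only [submatrix_mul_equiv]⟩

variable [DecidableEq m] [DecidableEq n]

theorem PosDef.mul_mul_transpose_of_isUnit {P : Matrix n n ℝ} (hP : P.PosDef) {S : Matrix n n ℝ}
    (hS : IsUnit S) : (S * P * Sᵀ).PosDef := by
  have h := hP.mul_mul_conjTranspose_same (vecMul_injective_of_isUnit hS)
  rwa [conjTranspose_eq_transpose_of_trivial] at h

theorem IsPosDefMul.conj {B S T : Matrix n n ℝ} (hB : B.IsPosDefMul) (hST : S * T = 1) :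
    (S * B * T).IsPosDefMul := by
  obtain ⟨P, Q, hP, hQ, rfl⟩ := hB
  have hTS : T * S = 1 := mul_eq_one_comm.1 hST
  have hST' : Sᵀ * Tᵀ = 1 := by rw [← transpose_mul, hTS, transpose_one]
  have hT : IsUnit Tᵀ := .of_mul_eq_one _ (mul_eq_one_comm.1 hST')
  refine ⟨S * P * Sᵀ, Tᵀ * Q * T, hP.mul_mul_transpose_of_isUnit (.of_mul_eq_one _ hST), ?_, ?_⟩
  · simpa using hQ.mul_mul_transpose_of_isUnit hT
  · calc S * (P * Q) * T = S * P * 1 * Q * T := by simp only [mul_one, mul_assoc]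
      _ = S * P * Sᵀ * (Tᵀ * Q * T) := by rw [← hST']; simp only [mul_assoc]

theorem IsPosDefMul.fromBlocks_zero₁₂ {B : Matrix n n ℝ} (hB : B.IsPosDefMul) {c : ℝ}
    (hc : 0 < c) (hcB : B.charpoly.eval c ≠ 0) (X : Matrix n m ℝ) :
    (fromBlocks (c • 1) 0 X B).IsPosDefMul := by
  obtain ⟨P, Q, hP, hQ, hPQ⟩ := hB
  have hunit : IsUnit (c • (1 : Matrix n n ℝ) - B).det := by
    rw [eval_charpoly] at hcB
    rw [smul_one_eq_diagonal]
    exact isUnit_iff_ne_zero.2 hcB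
  set Z := (c • (1 : Matrix n n ℝ) - B)⁻¹ * X with hZ
  have hX : c • Z - B * Z = X := by
    rw [← mul_nonsing_inv_cancel_left _ X hunit, ← hZ, Matrix.sub_mul, Matrix.smul_mul,
      Matrix.one_mul]
  have hdiag : (fromBlocks (c • (1 : Matrix m m ℝ)) 0 0 B).IsPosDefMul :=
    ⟨_, _, (PosDef.one.smul hc).fromBlocks_zero_zero hP, PosDef.one.fromBlocks_zero_zero hQ, by
      simp [fromBlocks_multiply, hPQ]⟩
  convert hdiag.conj (S := fromBlocks 1 0 Z 1) (T := fromBlocks 1 0 (-Z) 1)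
    (by simp [fromBlocks_multiply]) using 1
  simp [fromBlocks_multiply, ← hX, sub_eq_add_neg]

theorem IsPosDefMul.fromBlocks_zero₂₁ {B : Matrix n n ℝ} (hB : B.IsPosDefMul) {c : ℝ}
    (hc : 0 < c) (hcB : B.charpoly.eval c ≠ 0) (Y : Matrix m n ℝ) :
    (fromBlocks (c • 1) Y 0 B).IsPosDefMul := by
  have h := (hB.transpose.fromBlocks_zero₁₂ hc (by rwa [charpoly_transpose]) Yᵀ).transpose
  simpa [fromBlocks_transpose] using h

theorem exists_pos_eval_charpoly_ne_zero (B C : Matrix n n ℝ) :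
    ∃ c : ℝ, 0 < c ∧ B.charpoly.eval c ≠ 0 ∧ C.charpoly.eval c⁻¹ ≠ 0 := by
  have hfin : ((B.charpoly.roots.toFinset ∪ C.charpoly.roots.toFinset.image (·⁻¹) :
    Finset ℝ) : Set ℝ).Finite := Finset.finite_toSet _
  obtain ⟨c, hc, hc'⟩ := ((Set.Ioi_infinite (0 : ℝ)).sdiff hfin).nonempty
  refine ⟨c, hc, fun h => hc' ?_, fun h => hc' ?_⟩
  · simp [B.charpoly_monic.ne_zero, h]
  · simp only [Finset.coe_union, Finset.coe_image]
    exact Or.inr ⟨c⁻¹, by simp [C.charpoly_monic.ne_zero, h], inv_inv c⟩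

theorem IsPosDefMulFive.congr_of_mul_eq_one {A S T : Matrix n n ℝ} (hA : A.IsPosDefMulFive)
    (hST : S * T = 1) : (S * A * Sᵀ).IsPosDefMulFive := by
  obtain ⟨B, C, K, hB, hC, hK, rfl⟩ := hA
  refine ⟨_, _, _, hB.conj hST, hC.conj hST,
    hK.mul_mul_transpose_of_isUnit (.of_mul_eq_one _ hST), ?_⟩
  have hTS : T * S = 1 := mul_eq_one_comm.1 hST
  calc S * (B * C * K) * Sᵀ = S * B * 1 * C * 1 * K * Sᵀ := by simp only [mul_one, mul_assoc]
    _ = _ := by rw [← hTS]; simp only [mul_assoc]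

/-- The property passes from a Schur complement to the whole matrix, even after changing the
pivot block by column operations. -/
theorem IsPosDefMulFive.fromBlocks_mul {A : Matrix n n ℝ} (hA : A.IsPosDefMulFive)
    (X Z : Matrix n m ℝ) (Y : Matrix m n ℝ) :
    (fromBlocks 1 0 X 1 * fromBlocks 1 Y 0 A * fromBlocks 1 0 Z 1).IsPosDefMulFive := by
  obtain ⟨B, C, K, hB, hC, hK, rfl⟩ := hA
  obtain ⟨c, hc, hcB, hcC⟩ := exists_pos_eval_charpoly_ne_zero B C
  have hKinv : Y * K⁻¹ * K = Y :=
    nonsing_inv_mul_cancel_right _ _ ((isUnit_iff_isUnit_det _).1 hK.isUnit)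
  have hS : IsUnit (fromBlocks (1 : Matrix m m ℝ) Zᵀ 0 (1 : Matrix n n ℝ)) :=
    .of_mul_eq_one (fromBlocks 1 (-Zᵀ) 0 1) (by simp [fromBlocks_multiply])
  refine ⟨_, _, _, hB.fromBlocks_zero₁₂ hc hcB (c • X),
    hC.fromBlocks_zero₂₁ (inv_pos.2 hc) hcC (c⁻¹ • (Y * K⁻¹ - Zᵀ)),
    (PosDef.one.fromBlocks_zero_zero hK).mul_mul_transpose_of_isUnit hS, ?_⟩
  have hfactor : fromBlocks (c • (1 : Matrix m m ℝ)) 0 (c • X) B *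
      fromBlocks (c⁻¹ • (1 : Matrix m m ℝ)) (c⁻¹ • (Y * K⁻¹ - Zᵀ)) 0 C =
      fromBlocks 1 0 X 1 * fromBlocks 1 (Y * K⁻¹) 0 (B * C) * fromBlocks 1 (-Zᵀ) 0 1 := by
    simp [fromBlocks_multiply, smul_smul, hc.ne', sub_eq_add_neg, Matrix.mul_add, smul_add,
      add_comm, add_assoc]
  have hcancel : fromBlocks 1 (-Zᵀ) 0 1 * fromBlocks (1 : Matrix m m ℝ) Zᵀ 0 (1 : Matrix n n ℝ)
      = 1 := by simp [fromBlocks_multiply]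
  have hK' : fromBlocks (1 : Matrix m m ℝ) Y 0 (B * C * K) =
      fromBlocks 1 (Y * K⁻¹) 0 (B * C) * fromBlocks 1 0 0 K := by
    simp [fromBlocks_multiply, hKinv]
  rw [hfactor, hK']
  simp only [fromBlocks_transpose, transpose_one, transpose_zero, transpose_transpose, mul_assoc]
  rw [← mul_assoc (fromBlocks 1 (-Zᵀ) 0 1), hcancel, one_mul]

/-- If every matrix of determinant one over the index type `n` is a product of five positive
definite matrices, then so is every block matrix of determinant one over `Unit ⊕ n` whose
upper right block is nonzero. -/
theorem isPosDefMulFive_fromBlocks_of_ne_zero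
    (ih : ∀ A : Matrix n n ℝ, A.det = 1 → A.IsPosDefMulFive) (a : Matrix Unit Unit ℝ)
    {b : Matrix Unit n ℝ} (hb : b ≠ 0) (c : Matrix n Unit ℝ) (D : Matrix n n ℝ)
    (hdet : (fromBlocks a b c D).det = 1) : (fromBlocks a b c D).IsPosDefMulFive := by
  obtain ⟨j, hj⟩ : ∃ j, b () j ≠ 0 := by
    by_contra! h
    exact hb (by ext _ j; exact h j)
  obtain ⟨Z, hZ⟩ : ∃ Z : Matrix n Unit ℝ, 1 + b * Z = a := by
    refine ⟨of fun i _ => if i = j then (a () () - 1) / b () j else 0, ?_⟩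
    ext
    simp [mul_apply, mul_div_cancel₀ _ hj]
  have hfactor : fromBlocks a b c D = fromBlocks 1 0 (c - D * Z) 1 *
      fromBlocks 1 b 0 (D - (c - D * Z) * b) * fromBlocks 1 0 Z 1 := by
    simp [fromBlocks_multiply, hZ]
  rw [hfactor] at hdet ⊢
  refine (ih _ ?_).fromBlocks_mul _ _ _
  simpa using hdet

theorem isPosDefMulFive_sum [Nonempty n]
    (ih : ∀ A : Matrix n n ℝ, A.det = 1 → A.IsPosDefMulFive) (A : Matrix (Unit ⊕ n) (Unit ⊕ n) ℝ)
    (hdet : A.det = 1) : A.IsPosDefMulFive := by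
  obtain ⟨a, b, c, D, rfl⟩ : ∃ a b c D, A = fromBlocks a b c D :=
    ⟨_, _, _, _, (fromBlocks_toBlocks A).symm⟩
  by_cases hb : b = 0
  · subst hb
    have ha : a () () ≠ 0 := by
      rintro h
      simp [det_fromBlocks_zero₁₂, h] at hdet
    set v : Matrix n Unit ℝ := of fun _ _ => 1 with hv
    have hav : a * vᵀ ≠ 0 := by
      obtain ⟨j⟩ := ‹Nonempty n›
      intro h
      exact ha (by simpa [mul_apply, hv] using congrFun₂ h () j)
    have hS : fromBlocks 1 0 (-v) 1 * fromBlocks (1 : Matrix Unit Unit ℝ) 0 v (1 : Matrix n n ℝ) = 1 := by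
      simp [fromBlocks_multiply]
    have hcongr : fromBlocks 1 0 v (1 : Matrix n n ℝ) * fromBlocks a 0 c D * (fromBlocks 1 0 v 1)ᵀ =
        fromBlocks a (a * vᵀ) (v * a + c) ((v * a + c) * vᵀ + D) := by
      simp [fromBlocks_multiply, fromBlocks_transpose]
    have h := isPosDefMulFive_fromBlocks_of_ne_zero ih a hav (v * a + c) ((v * a + c) * vᵀ + D) (by
      rw [← hcongr, det_mul, det_mul, det_transpose, hdet]
      simp)
    rw [← hcongr] at h
    convert h.congr_of_mul_eq_one hS using 1
    have hS' : (fromBlocks (1 : Matrix Unit Unit ℝ) 0 v (1 : Matrix n n ℝ))ᵀ *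
        (fromBlocks 1 0 (-v) 1)ᵀ = 1 := by
      rw [← transpose_mul, hS, transpose_one]
    rw [mul_assoc, mul_assoc, hS', mul_one, ← mul_assoc, hS, one_mul]
  · exact isPosDefMulFive_fromBlocks_of_ne_zero ih a hb c D hdet

theorem isPosDefMulFive_one : (1 : Matrix n n ℝ).IsPosDefMulFive :=
  have h : (1 : Matrix n n ℝ).IsPosDefMul := ⟨1, 1, .one, .one, (one_mul 1).symm⟩
  ⟨1, 1, 1, h, h, .one, by simp⟩

theorem isPosDefMulFive_of_det_eq_one :
    ∀ {k : ℕ} (A : Matrix (Fin k) (Fin k) ℝ), A.det = 1 → A.IsPosDefMulFive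
  | 0, A, _ => Subsingleton.elim 1 A ▸ isPosDefMulFive_one
  | 1, A, h => by
    have hA : A = 1 := by
      ext i j
      rw [det_fin_one] at h
      rw [Subsingleton.elim i 0, Subsingleton.elim j 0, h, one_apply_eq]
    exact hA ▸ isPosDefMulFive_one
  | k + 2, A, h => by
    let e : Unit ⊕ Fin (k + 1) ≃ Fin (k + 2) := Fintype.equivOfCardEq (by simp; omega)
    have hsum := isPosDefMulFive_sum isPosDefMulFive_of_det_eq_one (A.submatrix e e)
      (by rwa [det_submatrix_equiv_self])
    simpa using hsum.submatrix e.symm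

end Matrix

/-- Every real orthogonal `n × n` matrix `V` with `det V = 1` can be written as
a product of five symmetric positive definite real `n × n` matrices. -/
theorem orthogonal_eq_product_of_five_posDef {n : ℕ} (V : Matrix (Fin n) (Fin n) ℝ)
    (hV₁ : Vᵀ * V = 1) (hV₂ : V * Vᵀ = 1) (hdet : V.det = 1) :
    ∃ M₁ M₂ M₃ M₄ M₅ : Matrix (Fin n) (Fin n) ℝ,
      M₁.PosDef ∧ M₂.PosDef ∧ M₃.PosDef ∧ M₄.PosDef ∧ M₅.PosDef ∧
      V = M₅ * M₄ * M₃ * M₂ * M₁ := by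
  obtain ⟨_, _, M₁, ⟨M₅, M₄, h₅, h₄, rfl⟩, ⟨M₃, M₂, h₃, h₂, rfl⟩, h₁, h⟩ :=
    isPosDefMulFive_of_det_eq_one V hdet
  exact ⟨M₁, M₂, M₃, M₄, M₅, h₁, h₂, h₃, h₄, h₅, by rw [h]; simp only [mul_assoc]⟩
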